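/- Let p ∈ Δ*_m, q ∈ Δ*_n, let c ∈ ℝ^{m×n} with c ≥ 0 entrywise, and let (β_t)_{t≥0} be a positive, nondecreasing, concave annealing schedule with difference sequence α_t = β_t − β_{t−1}. Let (π_t) be generated by Annealed Sinkhorn and let π* be any optimal transport plan (a minimizer of ⟨c,π⟩ over Γ(p,q)). Then for every t ≥ 1: ‖π_t𝟙 − p‖₁ ≤ 3 √(α_t |⟨c, π* − π_t⟩|) + 3 √(|(β_t − β_0)/t − α_t| · |⟨c, π*⟩|) + 3 √(KL(π* | π_0)/t). -/

import Mathlib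

open Finset Filter Topology ENNReal

noncomputable section

/-- Frobenius inner product `⟨c, π⟩ = ∑_{ij} c_ij π_ij`. -/
def frob {m n : ℕ} (c π : Matrix (Fin m) (Fin n) ℝ) : ℝ := ∑ i, ∑ j, c i j * π i j

/-- Row sums `π𝟙`. -/
def rowSum {m n : ℕ} (π : Matrix (Fin m) (Fin n) ℝ) : Fin m → ℝ := fun i => ∑ j, π i j

/-- Column sums `πᵀ𝟙`. -/
def colSum {m n : ℕ} (π : Matrix (Fin m) (Fin n) ℝ) : Fin n → ℝ := fun j => ∑ i, π i j

/-- Kullback–Leibler divergence between nonnegative vectors. -/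
def KLvec {k : ℕ} (a b : Fin k → ℝ) : ℝ := ∑ i, (a i * Real.log (a i / b i) - a i + b i)

/-- Kullback–Leibler divergence between nonnegative matrices. -/
def KLmat {m n : ℕ} (a b : Matrix (Fin m) (Fin n) ℝ) : ℝ :=
  ∑ i, ∑ j, (a i j * Real.log (a i j / b i j) - a i j + b i j)

/-- The tipless simplex `Δ*_k`: strictly positive entries summing to 1. -/
def simplexPos (k : ℕ) : Set (Fin k → ℝ) := {p | (∀ i, 0 < p i) ∧ ∑ i, p i = 1}

/-- The simplex `Δ_k`: nonnegative entries summing to 1. -/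
def simplexNN (k : ℕ) : Set (Fin k → ℝ) := {p | (∀ i, 0 ≤ p i) ∧ ∑ i, p i = 1}

/-- Transport plans `Γ(p, q)`. -/
def Gamma {m n : ℕ} (p : Fin m → ℝ) (q : Fin n → ℝ) : Set (Matrix (Fin m) (Fin n) ℝ) :=
  {π | (∀ i j, 0 ≤ π i j) ∧ rowSum π = p ∧ colSum π = q}

/-- Half-relaxed plans `Γ(*, q)`. -/
def GammaStar {m n : ℕ} (q : Fin n → ℝ) : Set (Matrix (Fin m) (Fin n) ℝ) :=
  {π | (∀ i j, 0 ≤ π i j) ∧ colSum π = q}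

/-- Reference plan `π^ref = (mn)⁻¹ 𝟙𝟙ᵀ`. -/
def piRef (m n : ℕ) : Matrix (Fin m) (Fin n) ℝ := fun _ _ => 1 / (m * n)

/-- Optimal transport value `OT(p,q)`. -/
def OTval {m n : ℕ} (c : Matrix (Fin m) (Fin n) ℝ) (p : Fin m → ℝ) (q : Fin n → ℝ) : ℝ :=
  ⨅ π : Gamma p q, frob c π.1

/-- Entropic OT objective `⟨c,π⟩ + β⁻¹ KL(π|π^ref)`. -/
def eotObj {m n : ℕ} (c : Matrix (Fin m) (Fin n) ℝ) (β : ℝ) (π : Matrix (Fin m) (Fin n) ℝ) : ℝ :=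
  frob c π + β⁻¹ * KLmat π (piRef m n)

/-- Entropic OT value `EOT_β(p,q)`. -/
def eotVal {m n : ℕ} (c : Matrix (Fin m) (Fin n) ℝ) (β : ℝ) (p : Fin m → ℝ) (q : Fin n → ℝ) : ℝ :=
  ⨅ π : Gamma p q, eotObj c β π.1

/-- Gibbs kernel `K = e^{-βc}` (entrywise). -/
def gibbs {m n : ℕ} (c : Matrix (Fin m) (Fin n) ℝ) (β : ℝ) : Matrix (Fin m) (Fin n) ℝ :=
  fun i j => Real.exp (-(β * c i j))

/-- Annealed Sinkhorn scaling vectors `(a_t, b_t)`: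
`b_0 = 𝟙`, `a_{t+1} = p ⊘ (K_t b_t)`, `b_{t+1} = q ⊘ (K_{t+1}ᵀ a_{t+1})`, `K_t = e^{-β_t c}`. -/
def sinkAB {m n : ℕ} (p : Fin m → ℝ) (q : Fin n → ℝ) (c : Matrix (Fin m) (Fin n) ℝ)
    (β : ℕ → ℝ) : ℕ → (Fin m → ℝ) × (Fin n → ℝ)
  | 0 => (fun _ => 1, fun _ => 1)
  | t + 1 =>
    let prev := sinkAB p q c β t
    let a : Fin m → ℝ := fun i => p i / ∑ j, gibbs c (β t) i j * prev.2 j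
    (a, fun j => q j / ∑ i, gibbs c (β (t + 1)) i j * a i)

/-- Annealed Sinkhorn primal iterate `π_t = diag(a_t) K_t diag(b_t)`. -/
def sinkPlan {m n : ℕ} (p : Fin m → ℝ) (q : Fin n → ℝ) (c : Matrix (Fin m) (Fin n) ℝ)
    (β : ℕ → ℝ) (t : ℕ) : Matrix (Fin m) (Fin n) ℝ :=
  fun i j => (sinkAB p q c β t).1 i * gibbs c (β t) i j * (sinkAB p q c β t).2 j

/-- `ℓ¹` norm of a vector. -/
def l1vec {k : ℕ} (a : Fin k → ℝ) : ℝ := ∑ i, |a i|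

/-- Oscillation semi-norm `‖c‖_osc = max c - min c`. -/
def cOsc {m n : ℕ} (c : Matrix (Fin m) (Fin n) ℝ) : ℝ :=
  (⨆ i, ⨆ j, c i j) - ⨅ i, ⨅ j, c i j

/-- `‖log p‖_∞`. -/
def logSup {k : ℕ} (p : Fin k → ℝ) : ℝ := ⨆ i, |Real.log (p i)|

/-- The rounding ("projection") procedure of Altschuler et al. (Algorithm 3). -/
def roundPlan {m n : ℕ} (p : Fin m → ℝ) (q : Fin n → ℝ) (π : Matrix (Fin m) (Fin n) ℝ) :
    Matrix (Fin m) (Fin n) ℝ :=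
  let π' : Matrix (Fin m) (Fin n) ℝ := fun i j => min 1 (p i / rowSum π i) * π i j
  let π'' : Matrix (Fin m) (Fin n) ℝ := fun i j => π' i j * min 1 (q j / colSum π' j)
  fun i j => π'' i j +
    (p i - rowSum π'' i) * (q j - colSum π'' j) / l1vec (fun i' => p i' - rowSum π'' i')

/-- Relaxed entropic objective `F^reg(π) = ⟨c,π⟩ + α⁻¹ KL(π𝟙|p) + β⁻¹ KL(π|π^ref)`. -/
def Freg {m n : ℕ} (c : Matrix (Fin m) (Fin n) ℝ) (p : Fin m → ℝ) (α β : ℝ)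
    (π : Matrix (Fin m) (Fin n) ℝ) : ℝ :=
  frob c π + α⁻¹ * KLvec (rowSum π) p + β⁻¹ * KLmat π (piRef m n)

/-- Dual functional for the relaxed entropic problem. -/
def dualFun {m n : ℕ} (p : Fin m → ℝ) (q : Fin n → ℝ) (c : Matrix (Fin m) (Fin n) ℝ)
    (α β : ℝ) (u : Fin m → ℝ) (v : Fin n → ℝ) : ℝ :=
  α⁻¹ * (∑ i, (1 - Real.exp (-(α * u i))) * p i) + ∑ j, v j * q j
    - β⁻¹ * (∑ i, ∑ j, Real.exp (β * (u i + v j - c i j)) * piRef m n i j) + β⁻¹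

/-- Dual functional of entropic OT. -/
def eotDual {m n : ℕ} (p : Fin m → ℝ) (q : Fin n → ℝ) (c : Matrix (Fin m) (Fin n) ℝ)
    (β : ℝ) (u : Fin m → ℝ) (v : Fin n → ℝ) : ℝ :=
  ∑ i, p i * u i + ∑ j, q j * v j
    + β⁻¹ * (1 - ∑ i, ∑ j, piRef m n i j * Real.exp (β * (u i + v j - c i j)))

/-- The set `C_β` of plans of the form `diag(a) e^{-βc} diag(b)` with `a, b ≥ 0`. -/
def scalingSet {m n : ℕ} (c : Matrix (Fin m) (Fin n) ℝ) (β : ℝ) :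
    Set (Matrix (Fin m) (Fin n) ℝ) :=
  {π | ∃ a : Fin m → ℝ, ∃ b : Fin n → ℝ, (∀ i, 0 ≤ a i) ∧ (∀ j, 0 ≤ b j) ∧
    π = fun i j => a i * Real.exp (-(β * c i j)) * b j}

/-!
Annealed Sinkhorn is entropic mirror descent: `π_{t+1}` is the mirror step from `π_t`, over matrices
with column sums `q`, for the objective `F_α(π) = KL(π𝟙|p) + α⟨c, π⟩` with `α = α_{t+1}`.
Relative to the matrix entropy `F_α` is convex (the Bregman divergence `KL(π𝟙|π'𝟙)` of its first
term is nonnegative) and `1`-smooth (the same divergence is at most `KL(π|π')`), so a step satisfies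
`F_α(π_{t+1}) + KL(X|π_{t+1}) ≤ F_α(X) + KL(X|π_t)` for every competitor `X`. With `X = π_t` and
`α_{t+1} ≤ α_t`, the values `F_{α_t}(π_t)` decrease; with `X ∈ Γ(p,q)`, where `KL(X𝟙|p)` vanishes,
the inequalities telescope. Hence the last value is at most the average
`((β_t - β_0)⟨c, X⟩ + KL(X|π_0)) / t`, and Pinsker's inequality converts this bound on
`KL(π_t𝟙|p)` into the `ℓ¹` bound.
-/

open InformationTheory

section ScalarInequalities

lemma mul_klFun_div (x : ℝ) {y : ℝ} (hy : y ≠ 0) :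
    y * klFun (x / y) = x * Real.log (x / y) - x + y := by
  rw [klFun_apply]
  field_simp
  ring

lemma two_mul_sub_one_le_add_one_mul_log {x : ℝ} (hx : 1 ≤ x) :
    2 * (x - 1) ≤ (x + 1) * Real.log x := by
  have h := Real.le_log_one_add_of_nonneg (sub_nonneg.2 hx)
  rw [div_le_iff₀ (by linarith)] at h
  ring_nf at h ⊢
  exact h

lemma add_one_mul_log_le_two_mul_sub_one {x : ℝ} (hx₀ : 0 < x) (hx₁ : x ≤ 1) :
    (x + 1) * Real.log x ≤ 2 * (x - 1) := by
  have h := two_mul_sub_one_le_add_one_mul_log ((one_le_inv₀ hx₀).2 hx₁)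
  rw [Real.log_inv] at h
  have := mul_le_mul_of_nonneg_left h hx₀.le
  field_simp at this
  linarith

lemma hasDerivAt_mul_klFun_sub_sq {x : ℝ} (hx : x ≠ 0) :
    HasDerivAt (fun x ↦ (2 * x + 4) * klFun x - 3 * (x - 1) ^ 2)
      (4 * ((x + 1) * Real.log x - 2 * (x - 1))) x := by
  have hlin : HasDerivAt (fun x : ℝ ↦ 2 * x + 4) (2 * 1) x :=
    ((hasDerivAt_id x).const_mul 2).add_const 4
  have hsq : HasDerivAt (fun x : ℝ ↦ 3 * (x - 1) ^ 2) (3 * (2 * (x - 1))) x := by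
    simpa using (((hasDerivAt_id x).sub_const 1).pow 2).const_mul 3
  refine ((hlin.mul (hasDerivAt_klFun hx)).sub hsq).congr_deriv ?_
  rw [klFun_apply]
  ring

lemma three_mul_sub_one_sq_le_mul_klFun {x : ℝ} (hx : 0 ≤ x) :
    3 * (x - 1) ^ 2 ≤ (2 * x + 4) * klFun x := by
  set g : ℝ → ℝ := fun x ↦ (2 * x + 4) * klFun x - 3 * (x - 1) ^ 2 with hg
  have hcont : Continuous g := by fun_prop
  have hg_one : g 1 = 0 := by simp [hg, klFun_one]
  suffices 0 ≤ g x from sub_nonneg.1 this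
  rw [← hg_one]
  rcases le_total x 1 with hx₁ | hx₁
  · have hanti : AntitoneOn g (Set.Icc 0 1) := by
      refine antitoneOn_of_hasDerivWithinAt_nonpos (convex_Icc 0 1) hcont.continuousOn
        (f' := fun y ↦ 4 * ((y + 1) * Real.log y - 2 * (y - 1))) ?_ ?_ <;>
        rw [interior_Icc] <;> intro y hy
      · exact (hasDerivAt_mul_klFun_sub_sq hy.1.ne').hasDerivWithinAt
      · linarith [add_one_mul_log_le_two_mul_sub_one hy.1 hy.2.le]
    exact hanti ⟨hx, hx₁⟩ ⟨zero_le_one, le_rfl⟩ hx₁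
  · have hmono : MonotoneOn g (Set.Ici 1) := by
      refine monotoneOn_of_hasDerivWithinAt_nonneg (convex_Ici 1) hcont.continuousOn
        (f' := fun y ↦ 4 * ((y + 1) * Real.log y - 2 * (y - 1))) ?_ ?_ <;>
        rw [interior_Ici] <;> intro y hy
      · exact (hasDerivAt_mul_klFun_sub_sq (zero_lt_one.trans hy).ne').hasDerivWithinAt
      · linarith [two_mul_sub_one_le_add_one_mul_log (le_of_lt hy)]
    exact hmono Set.self_mem_Ici hx₁ hx₁

lemma sqrt_add_le_add_sqrt (x y : ℝ) : √(x + y) ≤ √x + √y := by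
  have hx : x ≤ √x ^ 2 := (Real.sqrt_le_iff.1 le_rfl).2
  have hy : y ≤ √y ^ 2 := (Real.sqrt_le_iff.1 le_rfl).2
  refine Real.sqrt_le_iff.2 ⟨by positivity, ?_⟩
  linarith [add_sq √x √y, show 0 ≤ 2 * √x * √y by positivity]

end ScalarInequalities

section KLvec

variable {k : ℕ} {a b : Fin k → ℝ}

lemma KLvec_eq_sum_mul_klFun (a : Fin k → ℝ) (hb : ∀ i, b i ≠ 0) :
    KLvec a b = ∑ i, b i * klFun (a i / b i) :=
  sum_congr rfl fun i _ ↦ (mul_klFun_div (a i) (hb i)).symm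

lemma KLvec_nonneg (ha : ∀ i, 0 ≤ a i) (hb : ∀ i, 0 < b i) : 0 ≤ KLvec a b := by
  rw [KLvec_eq_sum_mul_klFun a fun i ↦ (hb i).ne']
  exact sum_nonneg fun i _ ↦ mul_nonneg (hb i).le (klFun_nonneg (div_nonneg (ha i) (hb i).le))

lemma KLvec_self (a : Fin k → ℝ) : KLvec a a = 0 :=
  sum_eq_zero fun i _ ↦ by rcases eq_or_ne (a i) 0 with h | h <;> simp [h]

/-- `KLvec` is the Bregman divergence of the entropy, so the entropies of `x` and `y` cancel. -/
lemma KLvec_four_point (x y : Fin k → ℝ) (ha : ∀ i, a i ≠ 0) (hb : ∀ i, b i ≠ 0) :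
    (KLvec x a - KLvec x b) - (KLvec y a - KLvec y b) =
      ∑ i, (x i - y i) * (Real.log (b i) - Real.log (a i)) := by
  have mul_log_div (s : ℝ) {r : ℝ} (hr : r ≠ 0) :
      s * Real.log (s / r) = s * (Real.log s - Real.log r) := by
    rcases eq_or_ne s 0 with rfl | hs
    · simp
    · rw [Real.log_div hs hr]
  simp only [KLvec, ← sum_sub_distrib]
  refine sum_congr rfl fun i _ ↦ ?_
  rw [mul_log_div (x i) (ha i), mul_log_div (x i) (hb i), mul_log_div (y i) (ha i),
    mul_log_div (y i) (hb i)]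
  ring

/-- The **log-sum inequality**: Jensen for `klFun` with weights `b i / ∑ i, b i`. -/
lemma sum_mul_log_div_sum_le_KLvec (ha : ∀ i, 0 ≤ a i) (hb : ∀ i, 0 < b i) :
    (∑ i, a i) * Real.log ((∑ i, a i) / ∑ i, b i) - ∑ i, a i + ∑ i, b i ≤ KLvec a b := by
  rcases isEmpty_or_nonempty (Fin k) with _ | _
  · simp [KLvec]
  have hB : 0 < ∑ i, b i := sum_pos (fun i _ ↦ hb i) univ_nonempty
  have jensen := convexOn_klFun.map_sum_le (t := univ) (w := fun i ↦ b i / ∑ i, b i)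
    (p := fun i ↦ a i / b i) (fun i _ ↦ (div_pos (hb i) hB).le)
    (by rw [← sum_div, div_self hB.ne']) (fun i _ ↦ div_nonneg (ha i) (hb i).le)
  have hmean : ∑ i, b i / (∑ i, b i) * (a i / b i) = (∑ i, a i) / ∑ i, b i := by
    rw [sum_div]
    refine sum_congr rfl fun i _ ↦ ?_
    have := (hb i).ne'
    field_simp
  simp only [smul_eq_mul, hmean] at jensen
  simp only [div_mul_eq_mul_div] at jensen
  rwa [← sum_div, le_div_iff₀' hB, mul_klFun_div _ hB.ne',
    ← KLvec_eq_sum_mul_klFun a fun i ↦ (hb i).ne'] at jensen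

/-- Cauchy–Schwarz with weights `a i + 2 * b i`, which come from the scalar inequality
`3 (x - 1) ^ 2 ≤ (2 x + 4) klFun x` at `x = a i / b i`. -/
lemma l1vec_sub_sq_le_mul_KLvec (ha : ∀ i, 0 ≤ a i) (hb : ∀ i, 0 < b i) :
    l1vec (fun i ↦ a i - b i) ^ 2 ≤ (2 / 3 * ∑ i, (a i + 2 * b i)) * KLvec a b := by
  rw [l1vec, mul_sum, KLvec_eq_sum_mul_klFun a fun i ↦ (hb i).ne']
  refine sum_sq_le_sum_mul_sum_of_sq_le_mul _ (fun i _ ↦ ?_) (fun i _ ↦ ?_) fun i _ ↦ ?_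
  · linarith [ha i, hb i]
  · exact mul_nonneg (hb i).le (klFun_nonneg (div_nonneg (ha i) (hb i).le))
  · have hbi := (hb i).ne'
    have h := mul_le_mul_of_nonneg_left
      (three_mul_sub_one_sq_le_mul_klFun (div_nonneg (ha i) (hb i).le)) (sq_nonneg (b i))
    have hl : b i ^ 2 * (3 * (a i / b i - 1) ^ 2) = 3 * (a i - b i) ^ 2 := by field_simp
    have hr : b i ^ 2 * ((2 * (a i / b i) + 4) * klFun (a i / b i)) =
        2 * (a i + 2 * b i) * (b i * klFun (a i / b i)) := by field_simp; ring
    rw [sq_abs]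
    linarith

/-- **Pinsker's inequality**. -/
lemma l1vec_sub_le_sqrt_two_mul_KLvec (ha : ∀ i, 0 ≤ a i) (hb : ∀ i, 0 < b i)
    (ha_sum : ∑ i, a i = 1) (hb_sum : ∑ i, b i = 1) :
    l1vec (fun i ↦ a i - b i) ≤ √(2 * KLvec a b) := by
  refine Real.le_sqrt_of_sq_le ((l1vec_sub_sq_le_mul_KLvec ha hb).trans_eq ?_)
  rw [sum_add_distrib, ← mul_sum, ha_sum, hb_sum]
  ring

end KLvec

section KLmat

variable {m n : ℕ} {A B : Matrix (Fin m) (Fin n) ℝ}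

lemma KLmat_eq_sum_KLvec (A B : Matrix (Fin m) (Fin n) ℝ) :
    KLmat A B = ∑ i, KLvec (A i) (B i) := rfl

lemma KLmat_nonneg (hA : ∀ i j, 0 ≤ A i j) (hB : ∀ i j, 0 < B i j) : 0 ≤ KLmat A B :=
  sum_nonneg fun i _ ↦ KLvec_nonneg (hA i) (hB i)

lemma KLmat_self (A : Matrix (Fin m) (Fin n) ℝ) : KLmat A A = 0 :=
  sum_eq_zero fun i _ ↦ KLvec_self (A i)

lemma KLmat_four_point (X Y : Matrix (Fin m) (Fin n) ℝ) (hA : ∀ i j, A i j ≠ 0)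
    (hB : ∀ i j, B i j ≠ 0) :
    (KLmat X A - KLmat X B) - (KLmat Y A - KLmat Y B) =
      ∑ i, ∑ j, (X i j - Y i j) * (Real.log (B i j) - Real.log (A i j)) := by
  simp only [KLmat_eq_sum_KLvec, ← sum_sub_distrib]
  exact sum_congr rfl fun i _ ↦ KLvec_four_point (X i) (Y i) (hA i) (hB i)

lemma KLvec_rowSum_le_KLmat (hA : ∀ i j, 0 ≤ A i j) (hB : ∀ i j, 0 < B i j) :
    KLvec (rowSum A) (rowSum B) ≤ KLmat A B :=
  sum_le_sum fun i _ ↦ sum_mul_log_div_sum_le_KLvec (hA i) (hB i)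

end KLmat

section MirrorDescent

variable {m n : ℕ} {c P P' X : Matrix (Fin m) (Fin n) ℝ} {p : Fin m → ℝ} {α : ℝ}

lemma frob_sub (c A B : Matrix (Fin m) (Fin n) ℝ) : frob c (A - B) = frob c A - frob c B := by
  simp only [frob, Matrix.sub_apply, mul_sub, sum_sub_distrib]

lemma sum_rowSum_eq_sum_colSum (A : Matrix (Fin m) (Fin n) ℝ) :
    ∑ i, rowSum A i = ∑ j, colSum A j := sum_comm

lemma rowSum_pos [NeZero n] (hP : ∀ i j, 0 < P i j) (i : Fin m) : 0 < rowSum P i :=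
  sum_pos (fun j _ ↦ hP i j) univ_nonempty

/-- The relaxed transport objective `F_α(π) = KL(π𝟙|p) + α⟨c, π⟩` minimized by mirror descent. It is
`α` times the usual penalized objective `⟨c, π⟩ + α⁻¹ KL(π𝟙|p)`, so that `α = 0` is allowed. -/
def relaxedObj (c : Matrix (Fin m) (Fin n) ℝ) (p : Fin m → ℝ) (α : ℝ)
    (π : Matrix (Fin m) (Fin n) ℝ) : ℝ :=
  KLvec (rowSum π) p + α * frob c π

/-- `P'` is obtained from `P` by an entropic mirror-descent step of unit length on
`relaxedObj c p α` with fixed column sums: `log P' = log P - ∇F_α(P) + 𝟙wᵀ`, where `w` is the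
multiplier of the column constraint and `∇F_α(P) = log (P𝟙 ⊘ p)𝟙ᵀ + αc`. -/
def IsMirrorStep (c : Matrix (Fin m) (Fin n) ℝ) (p : Fin m → ℝ) (α : ℝ)
    (P P' : Matrix (Fin m) (Fin n) ℝ) : Prop :=
  ∃ w : Fin n → ℝ, ∀ i j,
    Real.log (P' i j) = Real.log (P i j) - (Real.log (rowSum P i / p i) + α * c i j) + w j

lemma sum_sub_mul_of_colSum_eq {X Y : Matrix (Fin m) (Fin n) ℝ} (hXY : colSum X = colSum Y)
    (c : Matrix (Fin m) (Fin n) ℝ) (u : Fin m → ℝ) (w : Fin n → ℝ) (α : ℝ) :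
    ∑ i, ∑ j, (X i j - Y i j) * (u i - α * c i j + w j) =
      ∑ i, (rowSum X i - rowSum Y i) * u i - α * (frob c X - frob c Y) := by
  have hcol : ∑ i, ∑ j, (X i j - Y i j) * w j = 0 := by
    rw [sum_comm]
    refine sum_eq_zero fun j _ ↦ ?_
    rw [← sum_mul, sum_sub_distrib]
    exact mul_eq_zero_of_left (sub_eq_zero.2 (congrFun hXY j)) _
  have hrow (i : Fin m) : (rowSum X i - rowSum Y i) * u i = ∑ j, (X i j - Y i j) * u i := by
    rw [← sum_mul, sum_sub_distrib, rowSum, rowSum]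
  have hcost : α * (frob c X - frob c Y) = ∑ i, ∑ j, (X i j - Y i j) * (α * c i j) := by
    simp only [frob, ← sum_sub_distrib, mul_sum]
    exact sum_congr rfl fun i _ ↦ sum_congr rfl fun j _ ↦ by ring
  simp only [hrow, hcost, mul_add (X _ _ - Y _ _), mul_sub (X _ _ - Y _ _), sum_add_distrib,
    sum_sub_distrib, hcol, add_zero]

namespace IsMirrorStep

variable [NeZero n]

lemma relaxedObj_sub_relaxedObj (h : IsMirrorStep c p α P P') (hp : ∀ i, 0 < p i)
    (hP : ∀ i j, 0 < P i j) (hP' : ∀ i j, 0 < P' i j) (hcol : colSum X = colSum P') :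
    relaxedObj c p α X - relaxedObj c p α P' =
      KLmat X P' - KLmat X P + KLvec (rowSum X) (rowSum P) +
        (KLmat P' P - KLvec (rowSum P') (rowSum P)) := by
  obtain ⟨w, hw⟩ := h
  have hlog (i : Fin m) (j : Fin n) :
      Real.log (P' i j) - Real.log (P i j) =
        (Real.log (p i) - Real.log (rowSum P i)) - α * c i j + w j := by
    rw [hw, Real.log_div (rowSum_pos hP i).ne' (hp i).ne']
    ring
  have hmat := KLmat_four_point X P' (fun i j ↦ (hP i j).ne') fun i j ↦ (hP' i j).ne'
  have hvec := KLvec_four_point (rowSum X) (rowSum P') (fun i ↦ (rowSum_pos hP i).ne')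
    fun i ↦ (hp i).ne'
  simp only [hlog, KLmat_self, sum_sub_mul_of_colSum_eq hcol, ← hvec] at hmat
  simp only [relaxedObj]
  linarith

lemma relaxedObj_add_KLmat_le (h : IsMirrorStep c p α P P') (hp : ∀ i, 0 < p i)
    (hP : ∀ i j, 0 < P i j) (hP' : ∀ i j, 0 < P' i j) (hX : ∀ i j, 0 ≤ X i j)
    (hcol : colSum X = colSum P') :
    relaxedObj c p α P' + KLmat X P' ≤ relaxedObj c p α X + KLmat X P := by
  have hconvex : 0 ≤ KLvec (rowSum X) (rowSum P) :=
    KLvec_nonneg (fun i ↦ sum_nonneg fun j _ ↦ hX i j) (rowSum_pos hP)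
  have hsmooth := KLvec_rowSum_le_KLmat (fun i j ↦ (hP' i j).le) hP
  linarith [h.relaxedObj_sub_relaxedObj hp hP hP' hcol]

end IsMirrorStep

end MirrorDescent

section Sinkhorn

variable {m n : ℕ} {p : Fin m → ℝ} {q : Fin n → ℝ} {c X : Matrix (Fin m) (Fin n) ℝ} {β : ℕ → ℝ}

lemma gibbs_pos (c : Matrix (Fin m) (Fin n) ℝ) (s : ℝ) (i : Fin m) (j : Fin n) :
    0 < gibbs c s i j := Real.exp_pos _

lemma rowSum_sinkPlan_div (t : ℕ) (i : Fin m) :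
    rowSum (sinkPlan p q c β t) i / p i =
      (sinkAB p q c β t).1 i / (sinkAB p q c β (t + 1)).1 i := by
  simp only [rowSum, sinkPlan, sinkAB, div_div_eq_mul_div, mul_sum, mul_assoc]

variable [NeZero m] [NeZero n]

lemma sinkAB_pos (hp : ∀ i, 0 < p i) (hq : ∀ j, 0 < q j) (t : ℕ) :
    (∀ i, 0 < (sinkAB p q c β t).1 i) ∧ ∀ j, 0 < (sinkAB p q c β t).2 j := by
  induction t with
  | zero => simp [sinkAB]
  | succ t ih =>
    have ha (i : Fin m) : 0 < (sinkAB p q c β (t + 1)).1 i :=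
      div_pos (hp i) (sum_pos (fun j _ ↦ mul_pos (gibbs_pos ..) (ih.2 j)) univ_nonempty)
    exact ⟨ha, fun j ↦
      div_pos (hq j) (sum_pos (fun i _ ↦ mul_pos (gibbs_pos ..) (ha i)) univ_nonempty)⟩

lemma sinkPlan_pos (hp : ∀ i, 0 < p i) (hq : ∀ j, 0 < q j) (t : ℕ) (i : Fin m) (j : Fin n) :
    0 < sinkPlan p q c β t i j :=
  have ⟨ha, hb⟩ := sinkAB_pos hp hq t
  mul_pos (mul_pos (ha i) (gibbs_pos ..)) (hb j)

lemma log_sinkPlan (hp : ∀ i, 0 < p i) (hq : ∀ j, 0 < q j) (t : ℕ) (i : Fin m) (j : Fin n) :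
    Real.log (sinkPlan p q c β t i j) =
      Real.log ((sinkAB p q c β t).1 i) - β t * c i j + Real.log ((sinkAB p q c β t).2 j) := by
  have ⟨ha, hb⟩ := sinkAB_pos (c := c) (β := β) hp hq t
  rw [sinkPlan, Real.log_mul (mul_pos (ha i) (gibbs_pos ..)).ne' (hb j).ne',
    Real.log_mul (ha i).ne' (gibbs_pos ..).ne', gibbs, Real.log_exp, ← sub_eq_add_neg]

lemma isMirrorStep_sinkPlan (hp : ∀ i, 0 < p i) (hq : ∀ j, 0 < q j) (t : ℕ) :
    IsMirrorStep c p (β (t + 1) - β t) (sinkPlan p q c β t) (sinkPlan p q c β (t + 1)) := by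
  refine ⟨fun j ↦ Real.log ((sinkAB p q c β (t + 1)).2 j) - Real.log ((sinkAB p q c β t).2 j),
    fun i j ↦ ?_⟩
  rw [log_sinkPlan hp hq, log_sinkPlan hp hq, rowSum_sinkPlan_div,
    Real.log_div ((sinkAB_pos hp hq t).1 i).ne' ((sinkAB_pos hp hq (t + 1)).1 i).ne']
  ring

lemma colSum_sinkPlan_succ (hp : ∀ i, 0 < p i) (hq : ∀ j, 0 < q j) (t : ℕ) :
    colSum (sinkPlan p q c β (t + 1)) = q := by
  funext j
  have ha := (sinkAB_pos (c := c) (β := β) hp hq (t + 1)).1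
  have hS : 0 < ∑ i, gibbs c (β (t + 1)) i j * (sinkAB p q c β (t + 1)).1 i :=
    sum_pos (fun i _ ↦ mul_pos (gibbs_pos ..) (ha i)) univ_nonempty
  have hb : (sinkAB p q c β (t + 1)).2 j =
      q j / ∑ i, gibbs c (β (t + 1)) i j * (sinkAB p q c β (t + 1)).1 i := rfl
  simp only [colSum, sinkPlan, ← sum_mul, hb, mul_comm _ (gibbs c (β (t + 1)) _ j)]
  exact mul_div_cancel₀ _ hS.ne'

lemma relaxedObj_sinkPlan_succ_add_KLmat_le (hp : ∀ i, 0 < p i) (hq : ∀ j, 0 < q j)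
    (hX : ∀ i j, 0 ≤ X i j) (hXq : colSum X = q) (t : ℕ) :
    relaxedObj c p (β (t + 1) - β t) (sinkPlan p q c β (t + 1)) +
        KLmat X (sinkPlan p q c β (t + 1)) ≤
      relaxedObj c p (β (t + 1) - β t) X + KLmat X (sinkPlan p q c β t) :=
  (isMirrorStep_sinkPlan hp hq t).relaxedObj_add_KLmat_le hp (sinkPlan_pos hp hq t)
    (sinkPlan_pos hp hq (t + 1)) hX (hXq.trans (colSum_sinkPlan_succ hp hq t).symm)

lemma antitone_relaxedObj_sinkPlan (hp : ∀ i, 0 < p i) (hq : ∀ j, 0 < q j)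
    (hc : ∀ i j, 0 ≤ c i j) (hβ : ∀ t, β (t + 2) - β (t + 1) ≤ β (t + 1) - β t) :
    Antitone fun t ↦ relaxedObj c p (β (t + 1) - β t) (sinkPlan p q c β (t + 1)) := by
  refine antitone_nat_of_succ_le fun t ↦ ?_
  set P := sinkPlan p q c β (t + 1)
  set P' := sinkPlan p q c β (t + 2)
  have hP : ∀ i j, 0 < P i j := sinkPlan_pos hp hq _
  have hKL : 0 ≤ KLmat P P' := KLmat_nonneg (fun i j ↦ (hP i j).le) (sinkPlan_pos hp hq _)
  have hfrob : 0 ≤ frob c P :=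
    sum_nonneg fun i _ ↦ sum_nonneg fun j _ ↦ mul_nonneg (hc i j) (hP i j).le
  calc relaxedObj c p (β (t + 2) - β (t + 1)) P'
      ≤ relaxedObj c p (β (t + 2) - β (t + 1)) P' + KLmat P P' := le_add_of_nonneg_right hKL
    _ ≤ relaxedObj c p (β (t + 2) - β (t + 1)) P + KLmat P P :=
      relaxedObj_sinkPlan_succ_add_KLmat_le hp hq (fun i j ↦ (hP i j).le)
        (colSum_sinkPlan_succ hp hq t) (t + 1)
    _ = KLvec (rowSum P) p + (β (t + 2) - β (t + 1)) * frob c P := by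
      rw [KLmat_self, add_zero, relaxedObj]
    _ ≤ relaxedObj c p (β (t + 1) - β t) P :=
      add_le_add_right (mul_le_mul_of_nonneg_right (hβ t) hfrob) _

lemma sum_relaxedObj_sinkPlan_add_KLmat_le (hp : ∀ i, 0 < p i) (hq : ∀ j, 0 < q j)
    (hX : X ∈ Gamma p q) (T : ℕ) :
    ∑ t ∈ range T, relaxedObj c p (β (t + 1) - β t) (sinkPlan p q c β (t + 1)) +
        KLmat X (sinkPlan p q c β T) ≤
      (β T - β 0) * frob c X + KLmat X (sinkPlan p q c β 0) := by
  obtain ⟨hX_nonneg, hXp, hXq⟩ := hX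
  induction T with
  | zero => simp
  | succ T ih =>
    have hstep :=
      relaxedObj_sinkPlan_succ_add_KLmat_le (c := c) (β := β) hp hq hX_nonneg hXq T
    have hobj : relaxedObj c p (β (T + 1) - β T) X = (β (T + 1) - β T) * frob c X := by
      rw [relaxedObj, hXp, KLvec_self, zero_add]
    rw [sum_range_succ]
    linarith

lemma KLvec_rowSum_sinkPlan_le (hp : ∀ i, 0 < p i) (hq : ∀ j, 0 < q j) (hc : ∀ i j, 0 ≤ c i j)
    (hβ : ∀ t, β (t + 2) - β (t + 1) ≤ β (t + 1) - β t) (hX : X ∈ Gamma p q) {t : ℕ} (ht : 1 ≤ t) :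
    KLvec (rowSum (sinkPlan p q c β t)) p ≤
      (β t - β (t - 1)) * frob c (X - sinkPlan p q c β t) +
        ((β t - β 0) / t - (β t - β (t - 1))) * frob c X +
          KLmat X (sinkPlan p q c β 0) / t := by
  obtain ⟨s, rfl⟩ := Nat.exists_eq_add_of_le' ht
  have hsum := sum_relaxedObj_sinkPlan_add_KLmat_le (c := c) (β := β) hp hq hX (s + 1)
  have hlast : (s + 1 : ℕ) * relaxedObj c p (β (s + 1) - β s) (sinkPlan p q c β (s + 1)) ≤
      ∑ t ∈ range (s + 1), relaxedObj c p (β (t + 1) - β t) (sinkPlan p q c β (t + 1)) := by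
    simpa using card_nsmul_le_sum (range (s + 1)) _ _ fun t ht ↦
      antitone_relaxedObj_sinkPlan hp hq hc hβ (mem_range_succ_iff.1 ht)
  have hKL := KLmat_nonneg hX.1 (sinkPlan_pos (c := c) (β := β) hp hq (s + 1))
  have haverage : relaxedObj c p (β (s + 1) - β s) (sinkPlan p q c β (s + 1)) ≤
      ((β (s + 1) - β 0) * frob c X + KLmat X (sinkPlan p q c β 0)) / (s + 1 : ℕ) := by
    rw [le_div_iff₀' (by positivity)]
    linarith
  rw [relaxedObj, add_div, mul_div_right_comm] at haverage
  rw [Nat.add_sub_cancel, frob_sub]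
  linarith

end Sinkhorn

theorem annealed_sinkhorn_error_decomposition_general
    {m n : ℕ} (p : Fin m → ℝ) (q : Fin n → ℝ) (c : Matrix (Fin m) (Fin n) ℝ)
    (hp : p ∈ simplexPos m) (hq : q ∈ simplexPos n) (hc : ∀ i j, 0 ≤ c i j)
    (β : ℕ → ℝ) (hβconc : ∀ t, β (t + 2) - β (t + 1) ≤ β (t + 1) - β t)
    (X : Matrix (Fin m) (Fin n) ℝ) (hX : X ∈ Gamma p q) (t : ℕ) (ht : 1 ≤ t) :
    l1vec (fun i ↦ rowSum (sinkPlan p q c β t) i - p i) ≤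
      √2 * √(|β t - β (t - 1)| * |frob c (X - sinkPlan p q c β t)|) +
        √2 * √(|(β t - β 0) / t - (β t - β (t - 1))| * |frob c X|) +
          √2 * √(KLmat X (sinkPlan p q c β 0) / t) := by
  have : NeZero m := ⟨by rintro rfl; simpa using hp.2⟩
  have : NeZero n := ⟨by rintro rfl; simpa using hq.2⟩
  have hmass : ∑ i, rowSum (sinkPlan p q c β t) i = 1 := by
    obtain ⟨s, rfl⟩ := Nat.exists_eq_add_of_le' ht
    rw [sum_rowSum_eq_sum_colSum, colSum_sinkPlan_succ hp.1 hq.1, hq.2]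
  have hpinsker := l1vec_sub_le_sqrt_two_mul_KLvec
    (fun i ↦ (rowSum_pos (sinkPlan_pos hp.1 hq.1 t) i).le) hp.1 hmass hp.2
  have hKL := KLvec_rowSum_sinkPlan_le hp.1 hq.1 hc hβconc hX ht
  refine hpinsker.trans ?_
  rw [Real.sqrt_mul zero_le_two, ← mul_add, ← mul_add]
  gcongr
  refine (Real.sqrt_le_sqrt hKL).trans ((sqrt_add_le_add_sqrt _ _).trans ?_)
  gcongr
  refine (sqrt_add_le_add_sqrt _ _).trans ?_
  rw [← abs_mul, ← abs_mul]
  gcongr <;> exact le_abs_self _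

/-- Eq. (10): error decomposition for Annealed Sinkhorn.
For `c ≥ 0` and a positive, nondecreasing, concave schedule, for any optimal plan `π*`:
`‖π_t𝟙 - p‖₁ ≤ 3√(α_t|⟨c,π*-π_t⟩|) + 3√(|(β_t-β_0)/t - α_t|·|⟨c,π*⟩|) + 3√(KL(π*|π_0)/t)`. -/
theorem annealed_sinkhorn_error_decomposition
    {m n : ℕ} (p : Fin m → ℝ) (q : Fin n → ℝ) (c : Matrix (Fin m) (Fin n) ℝ)
    (hp : p ∈ simplexPos m) (hq : q ∈ simplexPos n) (hc : ∀ i j, 0 ≤ c i j)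
    (β : ℕ → ℝ) (hβpos : ∀ t, 0 < β t) (hβmono : Monotone β)
    (hβconc : ∀ t, β (t + 2) - β (t + 1) ≤ β (t + 1) - β t)
    (πstar : Matrix (Fin m) (Fin n) ℝ) (hπstar : πstar ∈ Gamma p q)
    (hπstaropt : ∀ π' ∈ Gamma p q, frob c πstar ≤ frob c π') :
    ∀ t : ℕ, 1 ≤ t →
      l1vec (fun i => rowSum (sinkPlan p q c β t) i - p i) ≤
        3 * Real.sqrt ((β t - β (t - 1)) * |frob c (πstar - sinkPlan p q c β t)|) +
          3 * Real.sqrt (|(β t - β 0) / (t : ℝ) - (β t - β (t - 1))| * |frob c πstar|) +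
            3 * Real.sqrt (KLmat πstar (sinkPlan p q c β 0) / (t : ℝ)) := by
  intro t ht
  have h := annealed_sinkhorn_error_decomposition_general p q c hp hq hc β hβconc πstar hπstar t ht
  rw [abs_of_nonneg (sub_nonneg.2 (hβmono (t.sub_le 1)))] at h
  have hsqrt : √2 ≤ (3 : ℝ) := Real.sqrt_le_iff.2 (by norm_num)
  exact h.trans (by gcongr)

end
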